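/- Let Σ be a complete set of p²+1 pairwise disjoint maximal commuting classes in U^{(p²)}, and let C be a maximal commuting class not belonging to Σ. Then C has nonempty intersection with exactly p+1 of the classes of Σ, and C intersects each of these p+1 classes in exactly p−1 operators. -/

import Mathlib

/-!
Label the operator `(X^m Z^n) ⊗ (X^k Z^l)` by the vector `(m, n, k, l)` of `V = (ZMod p)⁴`. Since
`Z X = ω X Z`, the product of the operators labelled `v` and `w` is a scalar multiple of the one
labelled `v + w`, and the two commute exactly when the symplectic form `⟨v, w⟩` vanishes
(`commute_pauli_iff`). The labelling is injective (`pauli_injective`).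

The `p² - 1` labels of a maximal commuting class span a totally isotropic subspace, which has
dimension at most `2` and so at most `p²` elements. Hence maximal commuting classes correspond to
totally isotropic planes with the origin removed (`MaxCommClass.exists_submodule`). Two distinct
such planes meet in a subspace of dimension `0` or `1`, so two distinct classes have `0` or `p - 1`
operators in common (`ncard_inter`). By counting, the `p² + 1` disjoint classes of a complete set
cover all `p⁴ - 1 = (p² + 1)(p² - 1)` non-identity operators (`CompleteSet.sUnion_eq`). A further
class, with `p² - 1 = (p + 1)(p - 1)` operators, is therefore cut into pieces of size `p - 1`, and
there are `p + 1` of them.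
-/

open Matrix
open scoped Kronecker

noncomputable section

/-- ω = exp(2πi/p), a primitive p-th root of unity. -/
def omega_p (p : ℕ) : ℂ := Complex.exp (2 * Real.pi * Complex.I / p)

/-- Generalized Pauli X on ℂ^p : X e_j = e_{j+1}. -/
def genX (p : ℕ) : Matrix (ZMod p) (ZMod p) ℂ :=
  Matrix.of fun i j => if i = j + 1 then 1 else 0

/-- Generalized Pauli Z on ℂ^p : Z e_j = ω^j e_j. -/
def genZ (p : ℕ) : Matrix (ZMod p) (ZMod p) ℂ :=
  Matrix.of fun i j => if i = j then omega_p p ^ j.val else 0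

/-- The space of p² × p² complex matrices. -/
abbrev PauliMat (p : ℕ) := Matrix (ZMod p × ZMod p) (ZMod p × ZMod p) ℂ

/-- The set U^{(p²)} of p⁴ two-particle generalized Pauli operators
    (X^m Z^n) ⊗ (X^k Z^l), with m,n,k,l ∈ {0,…,p−1}. -/
def PauliSet (p : ℕ) [NeZero p] : Set (PauliMat p) :=
  { U | ∃ m n k l : ZMod p,
      U = (genX p ^ m.val * genZ p ^ n.val) ⊗ₖ (genX p ^ k.val * genZ p ^ l.val) }

/-- A maximal commuting class: a subset of U^{(p²)} \ {I} of cardinality p² − 1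
    whose elements pairwise commute. -/
def MaxCommClass (p : ℕ) [NeZero p] (C : Set (PauliMat p)) : Prop :=
  C ⊆ PauliSet p \ {1} ∧ C.ncard = p ^ 2 - 1 ∧ ∀ U ∈ C, ∀ V ∈ C, Commute U V

/-- U ∘ V: the unique element of U^{(p²)} such that U·V is a power of ω times it. -/
def circ (p : ℕ) [NeZero p] (U V : PauliMat p) : PauliMat p :=
  @Classical.epsilon _ ⟨(0 : PauliMat p)⟩
    fun W => W ∈ PauliSet p ∧ ∃ j : ℕ, U * V = omega_p p ^ j • W

/-- U^{∘k}: the unique element of U^{(p²)} such that the matrix power U^k is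
    a power of ω times it. -/
def cpow (p : ℕ) [NeZero p] (U : PauliMat p) (k : ZMod p) : PauliMat p :=
  @Classical.epsilon _ ⟨(0 : PauliMat p)⟩
    fun W => W ∈ PauliSet p ∧ ∃ j : ℕ, U ^ k.val = omega_p p ^ j • W

/-- Independence: U^k is not a scalar multiple of V^l for any (k,l) ≠ (0,0). -/
def Indep (p : ℕ) [NeZero p] (U V : PauliMat p) : Prop :=
  ∀ k l : ZMod p, (k, l) ≠ (0, 0) → ∀ c : ℂ, U ^ k.val ≠ c • V ^ l.val

/-- The class ⟨U,V⟩ generated by a pair of independent commuting operators: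
    {U^{∘k} ∘ V^{∘l} : (k,l) ≠ (0,0)}. -/
def genClass (p : ℕ) [NeZero p] (U V : PauliMat p) : Set (PauliMat p) :=
  { W | ∃ k l : ZMod p, (k, l) ≠ (0, 0) ∧ W = circ p (cpow p U k) (cpow p V l) }

/-- A complete set of p² + 1 pairwise disjoint maximal commuting classes. -/
def CompleteSet (p : ℕ) [NeZero p] (S : Set (Set (PauliMat p))) : Prop :=
  S.ncard = p ^ 2 + 1 ∧ (∀ C ∈ S, MaxCommClass p C) ∧ S.Pairwise Disjoint

/-- A family of classes is unextendible if no maximal commuting class is contained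
    in U^{(p²)} \ ({I} ∪ ⋃ F). -/
def Unextendible (p : ℕ) [NeZero p] (F : Set (Set (PauliMat p))) : Prop :=
  ¬ ∃ C : Set (PauliMat p), MaxCommClass p C ∧ C ⊆ PauliSet p \ ({1} ∪ ⋃₀ F)

open Module

/-! ### The labelling of Pauli operators -/

theorem omega_p_pow_val (p : ℕ) [NeZero p] (a : ZMod p) :
    omega_p p ^ a.val = ZMod.stdAddChar a := by
  have h := ZMod.stdAddChar_coe (N := p) (a.val : ℤ)
  rw [Int.cast_natCast, ZMod.natCast_zmod_val] at h
  rw [h, omega_p, ← Complex.exp_nat_mul]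
  congr 1
  push_cast
  ring

theorem genX_pow (p : ℕ) [NeZero p] (m : ℕ) :
    genX p ^ m = Matrix.of fun i j => if i = j + (m : ZMod p) then 1 else 0 := by
  induction m with
  | zero =>
    ext i j
    simp [Matrix.one_apply]
  | succ m ih =>
    ext i j
    rw [pow_succ, ih, Matrix.mul_apply, Finset.sum_eq_single (j + 1)]
    · simp [genX, add_assoc, add_comm (1 : ZMod p)]
    · intro b _ hb
      simp [genX, hb]
    · simp

theorem genZ_pow (p : ℕ) [NeZero p] (n : ZMod p) :
    genZ p ^ n.val = Matrix.diagonal fun j => ZMod.stdAddChar (n * j) := by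
  have h : genZ p = Matrix.diagonal fun j => ZMod.stdAddChar j := by
    ext i j
    by_cases hij : i = j <;> simp [genZ, Matrix.diagonal, hij, omega_p_pow_val]
  rw [h, Matrix.diagonal_pow]
  congr 1
  ext j
  rw [Pi.pow_apply, ← AddChar.map_nsmul_eq_pow, nsmul_eq_mul, ZMod.natCast_zmod_val]

theorem genX_pow_mul_genZ_pow_apply (p : ℕ) [NeZero p] (m n i j : ZMod p) :
    (genX p ^ m.val * genZ p ^ n.val) i j =
      if i = j + m then ZMod.stdAddChar (n * j) else 0 := by
  rw [genX_pow, genZ_pow, Matrix.mul_diagonal]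
  simp

/-- The operator `(X^m Z^n) ⊗ (X^k Z^l)` with label `v = (m, n, k, l)`. -/
def pauli (p : ℕ) [NeZero p] (v : Fin 4 → ZMod p) : PauliMat p :=
  (genX p ^ (v 0).val * genZ p ^ (v 1).val) ⊗ₖ (genX p ^ (v 2).val * genZ p ^ (v 3).val)

theorem pauli_apply (p : ℕ) [NeZero p] (v : Fin 4 → ZMod p) (i j : ZMod p × ZMod p) :
    pauli p v i j = if i.1 = j.1 + v 0 ∧ i.2 = j.2 + v 2 then
      ZMod.stdAddChar (v 1 * j.1 + v 3 * j.2) else 0 := by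
  rw [pauli, Matrix.kroneckerMap_apply, genX_pow_mul_genZ_pow_apply,
    genX_pow_mul_genZ_pow_apply, AddChar.map_add_eq_mul]
  split_ifs <;> simp_all

theorem PauliSet_eq_range (p : ℕ) [NeZero p] : PauliSet p = Set.range (pauli p) := by
  ext U
  constructor
  · rintro ⟨m, n, k, l, rfl⟩
    exact ⟨![m, n, k, l], rfl⟩
  · rintro ⟨v, rfl⟩
    exact ⟨v 0, v 1, v 2, v 3, rfl⟩

theorem pauli_zero (p : ℕ) [NeZero p] : pauli p 0 = 1 := by
  simp [pauli]

theorem pauli_apply_add (p : ℕ) [NeZero p] (v : Fin 4 → ZMod p) (j : ZMod p × ZMod p) :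
    pauli p v (j.1 + v 0, j.2 + v 2) j = ZMod.stdAddChar (v 1 * j.1 + v 3 * j.2) := by
  simp [pauli_apply]

theorem stdAddChar_ne_zero (p : ℕ) [NeZero p] (a : ZMod p) :
    (ZMod.stdAddChar a : ℂ) ≠ 0 := by
  rw [← omega_p_pow_val]
  exact pow_ne_zero _ (Complex.exp_ne_zero _)

theorem pauli_injective (p : ℕ) [NeZero p] : Function.Injective (pauli p) := by
  intro v w h
  -- The position of the nonzero entry of each column determines the exponents of `X`.
  have h02 : v 0 = w 0 ∧ v 2 = w 2 := by
    have h1 := pauli_apply_add p v 0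
    rw [h, pauli_apply] at h1
    by_contra hne
    refine stdAddChar_ne_zero p _ (h1.symm.trans (if_neg ?_))
    simpa using hne
  -- The entries of the columns `(1, 0)` and `(0, 1)` determine the exponents of `Z`.
  have key : ∀ j : ZMod p × ZMod p, v 1 * j.1 + v 3 * j.2 = w 1 * j.1 + w 3 * j.2 := by
    intro j
    apply ZMod.injective_stdAddChar
    rw [← pauli_apply_add, ← pauli_apply_add, h, h02.1, h02.2]
  have h1 := key (1, 0)
  have h3 := key (0, 1)
  ext i
  fin_cases i
  · exact h02.1
  · simpa using h1
  · exact h02.2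
  · simpa using h3

theorem pauli_mul (p : ℕ) [NeZero p] (v w : Fin 4 → ZMod p) :
    pauli p v * pauli p w =
      (ZMod.stdAddChar (v 1 * w 0 + v 3 * w 2) : ℂ) • pauli p (v + w) := by
  ext i j
  rw [Matrix.mul_apply, Finset.sum_eq_single (j.1 + w 0, j.2 + w 2), pauli_apply_add,
    Matrix.smul_apply, pauli_apply, pauli_apply]
  · simp only [Pi.add_apply, add_assoc, add_comm (v _) (w _), smul_eq_mul, mul_ite, mul_zero,
      ite_mul, zero_mul, ← AddChar.map_add_eq_mul]
    congr 2
    ring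
  · intro b _ hb
    rw [pauli_apply p w, if_neg, mul_zero]
    rintro ⟨h1, h2⟩
    exact hb (Prod.ext h1 h2)
  · simp

/-! ### Commutation and the symplectic form -/

/-- The symplectic form on labels, with the sign for which the operators labelled `v` and `w`
satisfy `P v * P w = ω ^ ⟨v, w⟩ • (P w * P v)`. -/
def symp (p : ℕ) : LinearMap.BilinForm (ZMod p) (Fin 4 → ZMod p) :=
  LinearMap.mk₂ (ZMod p) (fun v w => v 1 * w 0 + v 3 * w 2 - (w 1 * v 0 + w 3 * v 2))
    (fun _ _ _ => by simp only [Pi.add_apply]; ring)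
    (fun _ _ _ => by simp only [Pi.smul_apply, smul_eq_mul]; ring)
    (fun _ _ _ => by simp only [Pi.add_apply]; ring)
    (fun _ _ _ => by simp only [Pi.smul_apply, smul_eq_mul]; ring)

theorem symp_apply (p : ℕ) (v w : Fin 4 → ZMod p) :
    symp p v w = v 1 * w 0 + v 3 * w 2 - (w 1 * v 0 + w 3 * v 2) := rfl

theorem commute_pauli_iff (p : ℕ) [NeZero p] (v w : Fin 4 → ZMod p) :
    Commute (pauli p v) (pauli p w) ↔ symp p v w = 0 := by
  rw [commute_iff_eq, pauli_mul, pauli_mul, add_comm w v, symp_apply, sub_eq_zero]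
  constructor
  · intro h
    -- Compare the nonzero entries in column `(0, 0)`.
    have h1 := congrFun₂ h ((0 : ZMod p × ZMod p).1 + (v + w) 0,
      (0 : ZMod p × ZMod p).2 + (v + w) 2) 0
    rw [Matrix.smul_apply, Matrix.smul_apply, pauli_apply_add] at h1
    exact ZMod.injective_stdAddChar (mul_right_cancel₀ (stdAddChar_ne_zero p _) h1)
  · intro h
    rw [h]

theorem symp_ker (p : ℕ) : (symp p).ker = ⊥ := by
  rw [LinearMap.ker_eq_bot']
  intro v h
  have key : ∀ w, symp p v w = 0 := fun w => by rw [h]; rfl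
  simp only [symp_apply] at key
  have h0 := key ![1, 0, 0, 0]
  have h1 := key ![0, 1, 0, 0]
  have h2 := key ![0, 0, 1, 0]
  have h3 := key ![0, 0, 0, 1]
  simp at h0 h1 h2 h3
  ext i
  fin_cases i <;> simp_all

/-- A totally isotropic subspace is contained in its orthogonal complement, hence has at most half
the dimension of the ambient space. -/
theorem finrank_le_two_of_isotropic (p : ℕ) [Fact p.Prime]
    (W : Submodule (ZMod p) (Fin 4 → ZMod p)) (hW : ∀ v ∈ W, ∀ w ∈ W, symp p v w = 0) :
    finrank (ZMod p) W ≤ 2 := by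
  have h1 := LinearMap.BilinForm.finrank_add_finrank_orthogonal' (B := symp p) W
  rw [symp_ker, inf_bot_eq, finrank_bot, finrank_fin_fun] at h1
  have h2 : W ≤ (symp p).orthogonal W := fun w hw v hv => hW v hv w hw
  have h3 := Submodule.finrank_mono h2
  omega

theorem card_submodule (p : ℕ) [Fact p.Prime] (W : Submodule (ZMod p) (Fin 4 → ZMod p)) :
    (W : Set (Fin 4 → ZMod p)).ncard = p ^ finrank (ZMod p) W := by
  rw [← Nat.card_coe_set_eq]
  have := Module.natCard_eq_pow_finrank (K := ZMod p) (V := W)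
  rwa [Nat.card_zmod] at this

/-! ### Commuting classes as totally isotropic planes -/

/-- A maximal commuting class consists of the operators labelled by the nonzero vectors of a plane
in `(ZMod p)⁴`. -/
theorem MaxCommClass.exists_submodule (p : ℕ) [NeZero p] [Fact p.Prime] {C : Set (PauliMat p)}
    (hC : MaxCommClass p C) : ∃ W : Submodule (ZMod p) (Fin 4 → ZMod p),
      finrank (ZMod p) W = 2 ∧ C = pauli p '' ((W : Set (Fin 4 → ZMod p)) \ {0}) := by
  obtain ⟨hsub, hcard, hcomm⟩ := hC
  have hp : 1 < p := (Fact.out : p.Prime).one_lt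
  have hp2 : 1 ≤ p ^ 2 := Nat.one_le_pow _ _ (by omega)
  set T : Set (Fin 4 → ZMod p) := pauli p ⁻¹' C with hT
  have hTC : pauli p '' T = C := by
    rw [hT, Set.image_preimage_eq_iff, ← PauliSet_eq_range]
    exact hsub.trans Set.sdiff_subset
  have hTcard : T.ncard = p ^ 2 - 1 := by
    rw [← hcard, ← hTC, Set.ncard_image_of_injective _ (pauli_injective p)]
  have hT0 : (0 : Fin 4 → ZMod p) ∉ T := fun h => (hsub h).2 (pauli_zero p)
  have hiso : ∀ v ∈ T, ∀ w ∈ T, symp p v w = 0 := fun v hv w hw =>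
    (commute_pauli_iff p v w).1 (hcomm _ hv _ hw)
  set W := Submodule.span (ZMod p) T with hW
  have hWiso : ∀ v ∈ W, ∀ w ∈ W, symp p v w = 0 := by
    intro v hv w hw
    have h1 : ∀ v ∈ T, W ≤ LinearMap.ker (symp p v) := fun v hv =>
      Submodule.span_le.2 fun w hw => hiso v hv w hw
    have h2 : W ≤ LinearMap.ker ((symp p).flip w) :=
      Submodule.span_le.2 fun v hv => h1 v hv hw
    exact h2 hv
  have hrank := finrank_le_two_of_isotropic p W hWiso
  have hTW : insert 0 T ⊆ (W : Set (Fin 4 → ZMod p)) :=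
    Set.insert_subset W.zero_mem Submodule.subset_span
  have hins : (insert 0 T).ncard = p ^ 2 := by
    rw [Set.ncard_insert_of_notMem hT0, hTcard]
    omega
  have heq : insert 0 T = (W : Set (Fin 4 → ZMod p)) := by
    apply Set.eq_of_subset_of_ncard_le hTW
    rw [hins, card_submodule]
    exact Nat.pow_le_pow_right (by omega) hrank
  refine ⟨W, ?_, ?_⟩
  · apply Nat.pow_right_injective hp
    change p ^ finrank (ZMod p) W = p ^ 2
    rw [← card_submodule, ← heq, hins]
  · rw [← heq, Set.insert_sdiff_self_of_notMem hT0, hTC]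

/-- The planes of two distinct classes meet in a proper subspace of each, which is a line as soon as
it contains a nonzero vector. -/
theorem ncard_inter (p : ℕ) [NeZero p] [Fact p.Prime] {C D : Set (PauliMat p)}
    (hC : MaxCommClass p C) (hD : MaxCommClass p D) (hne : C ≠ D) (hCD : (C ∩ D).Nonempty) :
    (C ∩ D).ncard = p - 1 := by
  obtain ⟨W, hW, rfl⟩ := hC.exists_submodule
  obtain ⟨W', hW', rfl⟩ := hD.exists_submodule
  have hinter : (W : Set (Fin 4 → ZMod p)) \ {0} ∩ ((W' : Set (Fin 4 → ZMod p)) \ {0}) =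
      ((W ⊓ W' : Submodule (ZMod p) (Fin 4 → ZMod p)) : Set (Fin 4 → ZMod p)) \ {0} := by
    ext v
    simp only [Set.mem_inter_iff, Set.mem_sdiff, SetLike.mem_coe, Submodule.mem_inf]
    tauto
  rw [← Set.image_inter (pauli_injective p), hinter] at hCD ⊢
  rw [Set.ncard_image_of_injective _ (pauli_injective p),
    Set.ncard_sdiff_singleton_of_mem (Submodule.zero_mem _), card_submodule]
  have hlt : finrank (ZMod p) (W ⊓ W' : Submodule (ZMod p) (Fin 4 → ZMod p)) < 2 := by
    by_contra! hge
    have h1 : W ⊓ W' = W := Submodule.eq_of_le_of_finrank_le inf_le_left (by omega)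
    have h2 : W ⊓ W' = W' := Submodule.eq_of_le_of_finrank_le inf_le_right (by omega)
    exact hne (by rw [← h1, h2])
  have hpos : finrank (ZMod p) (W ⊓ W' : Submodule (ZMod p) (Fin 4 → ZMod p)) ≠ 0 := by
    rw [Ne, Submodule.finrank_eq_zero]
    intro hbot
    simp [hbot] at hCD
  rw [show finrank (ZMod p) (W ⊓ W' : Submodule (ZMod p) (Fin 4 → ZMod p)) = 1 by omega, pow_one]

/-! ### Counting -/

theorem ncard_biUnion_const {ι α : Type*} {I : Set ι} (hI : I.Finite) {f : ι → Set α} {n : ℕ}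
    (hfin : ∀ i ∈ I, (f i).Finite) (hd : I.PairwiseDisjoint f) (hn : ∀ i ∈ I, (f i).ncard = n) :
    (⋃ i ∈ I, f i).ncard = I.ncard * n := by
  rw [hI.ncard_biUnion hfin hd, finsum_mem_congr rfl hn, finsum_mem_eq_finite_toFinset_sum _ hI,
    Finset.sum_const, smul_eq_mul, Set.ncard_eq_toFinset_card I hI]

theorem finite_PauliSet (p : ℕ) [NeZero p] : (PauliSet p).Finite := by
  rw [PauliSet_eq_range]
  exact Set.finite_range _

theorem MaxCommClass.finite {p : ℕ} [NeZero p] {C : Set (PauliMat p)} (hC : MaxCommClass p C) :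
    C.Finite :=
  (finite_PauliSet p).subset (hC.1.trans Set.sdiff_subset)

/-- The disjoint classes together contain `(p² + 1)(p² - 1) = p⁴ - 1` operators, which is all the
non-identity ones. -/
theorem CompleteSet.sUnion_eq (p : ℕ) [NeZero p] {S : Set (Set (PauliMat p))}
    (hS : CompleteSet p S) : ⋃₀ S = PauliSet p \ {1} := by
  obtain ⟨hcard, hmax, hdisj⟩ := hS
  have hSfin : S.Finite := Set.finite_of_ncard_ne_zero (by omega)
  apply Set.eq_of_subset_of_ncard_le (Set.sUnion_subset fun C hC => (hmax C hC).1) _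
    ((finite_PauliSet p).subset Set.sdiff_subset)
  rw [Set.sUnion_eq_biUnion, ncard_biUnion_const hSfin (fun C hC => (hmax C hC).finite) hdisj
    (fun C hC => (hmax C hC).2.1), hcard,
    Set.ncard_sdiff_singleton_of_mem (PauliSet_eq_range p ▸ ⟨0, pauli_zero p⟩),
    PauliSet_eq_range, ← Set.image_univ, Set.ncard_image_of_injective _ (pauli_injective p),
    Set.ncard_univ, Nat.card_fun, Nat.card_zmod, Nat.card_fin, ← Nat.sq_sub_sq (p ^ 2) 1]
  apply le_of_eq
  ring_nf


/-- If Σ is a complete set of p²+1 pairwise disjoint maximal commuting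
classes and C is a maximal commuting class not in Σ, then C meets exactly p+1 classes
of Σ, and it meets each of those in exactly p−1 operators. -/
theorem stmt5 (p : ℕ) [NeZero p] (hp : p.Prime) (S : Set (Set (PauliMat p)))
    (hS : CompleteSet p S) (C : Set (PauliMat p)) (hC : MaxCommClass p C)
    (hCS : C ∉ S) :
    {D ∈ S | (C ∩ D).Nonempty}.ncard = p + 1 ∧
    ∀ D ∈ S, (C ∩ D).Nonempty → (C ∩ D).ncard = p - 1 := by
  have : Fact p.Prime := ⟨hp⟩
  have hinter : ∀ D ∈ S, (C ∩ D).Nonempty → (C ∩ D).ncard = p - 1 := fun D hD =>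
    ncard_inter p hC (hS.2.1 D hD) (fun h => hCS (h ▸ hD))
  refine ⟨?_, hinter⟩
  have hSfin : S.Finite := Set.finite_of_ncard_ne_zero (by rw [hS.1]; omega)
  have hunion : ⋃ D ∈ {D ∈ S | (C ∩ D).Nonempty}, C ∩ D = C := by
    apply Set.Subset.antisymm (Set.iUnion₂_subset fun D _ => Set.inter_subset_left)
    intro U hU
    have hU' : U ∈ ⋃₀ S := hS.sUnion_eq p ▸ hC.1 hU
    obtain ⟨D, hD, hUD⟩ := hU'
    exact Set.mem_biUnion (show D ∈ {D ∈ S | (C ∩ D).Nonempty} from ⟨hD, U, hU, hUD⟩) ⟨hU, hUD⟩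
  have hcount := ncard_biUnion_const (I := {D ∈ S | (C ∩ D).Nonempty}) (f := fun D => C ∩ D)
    (hSfin.subset (Set.sep_subset _ _)) (fun D _ => hC.finite.subset Set.inter_subset_left)
    (fun D hD E hE hne => (hS.2.2 hD.1 hE.1 hne).mono Set.inter_subset_right
      Set.inter_subset_right)
    (fun D hD => hinter D hD.1 hD.2)
  rw [hunion, hC.2.1, ← one_pow 2, Nat.sq_sub_sq] at hcount
  exact (Nat.eq_of_mul_eq_mul_right (Nat.sub_pos_of_lt hp.one_lt) hcount).symm
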